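/- For every real η with 0 < η ≤ 1/2 and every a > 0, one has ∫₀^∞ 2·√(2π)·(x/η)·φ_η(x)·Φ̃_{1−η}(x) · min(1, a·η^{1/2}/x) dx ≤ 2a. -/

import Mathlib

open MeasureTheory

/-- `φ_v(x) = (2πv)^{-1/2} exp(-x²/(2v))`, the centered Gaussian density of variance `v`. -/
noncomputable def gaussDensity (v x : ℝ) : ℝ :=
  (Real.sqrt (2 * Real.pi * v))⁻¹ * Real.exp (-x ^ 2 / (2 * v))

/-- `Φ̃_v(x) = ∫₀^x φ_v(w) dw`. -/
noncomputable def gaussPartialCDF (v x : ℝ) : ℝ :=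
  ∫ w in (0 : ℝ)..x, gaussDensity v w

/-!
For `x > 0` we have `x · min(1, a√η/x) ≤ a√η`, so the integral is at most `2√(2π) (a/√η)` times
`∫₀^∞ φ_η Φ̃_{1-η}`. For independent `X ~ N(0, u)` and `Y ~ N(0, v)`, the integral `∫₀^∞ φ_u Φ̃_v`
is the probability of the sector `0 < Y < X`. Substituting `y = t x` in the inner integral and
integrating over `x` first evaluates it as `arctan(√(u/v)) / (2π)`, which for `u = η` and
`v = 1 - η` is `arcsin(√η) / (2π)`. Jordan's inequality gives `arcsin(√η) ≤ (π/2)√η`, so the whole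
integral is at most `a√(π/2) ≤ 2a`.
-/

section

open Real Set

lemma gaussDensity_eq (v x : ℝ) :
    gaussDensity v x = (√(2 * π * v))⁻¹ * exp (-(2 * v)⁻¹ * x ^ 2) := by
  rw [gaussDensity, neg_mul_comm, div_eq_inv_mul]

lemma gaussDensity_nonneg (v x : ℝ) : 0 ≤ gaussDensity v x := by
  unfold gaussDensity
  positivity

lemma gaussDensity_le {v : ℝ} (hv : 0 ≤ v) (x : ℝ) : gaussDensity v x ≤ (√(2 * π * v))⁻¹ := by
  refine mul_le_of_le_one_right (by positivity) (exp_le_one_iff.mpr ?_)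
  rw [neg_div, neg_nonpos]
  positivity

lemma continuous_gaussDensity (v : ℝ) : Continuous (gaussDensity v) := by
  unfold gaussDensity
  fun_prop

lemma gaussPartialCDF_nonneg (v : ℝ) {x : ℝ} (hx : 0 ≤ x) : 0 ≤ gaussPartialCDF v x :=
  intervalIntegral.integral_nonneg hx fun w _ ↦ gaussDensity_nonneg v w

lemma gaussPartialCDF_eq_integral_zero_one (v x : ℝ) :
    gaussPartialCDF v x = ∫ t in (0 : ℝ)..1, x * gaussDensity v (t * x) := by
  rw [intervalIntegral.integral_const_mul, intervalIntegral.mul_integral_comp_mul_right, zero_mul,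
    one_mul, gaussPartialCDF]

lemma integrable_gaussDensity_mul_self {v : ℝ} (hv : 0 < v) :
    Integrable fun x ↦ gaussDensity v x * x := by
  refine ((integrable_mul_exp_neg_mul_sq (b := (2 * v)⁻¹) (by positivity)).const_mul
    (√(2 * π * v))⁻¹).congr (.of_forall fun x ↦ ?_)
  simp only [gaussDensity_eq]
  ring

lemma integral_mul_exp_neg_mul_sq_Ioi {b : ℝ} (hb : 0 < b) :
    ∫ x in Ioi (0 : ℝ), x * exp (-b * x ^ 2) = (2 * b)⁻¹ := by
  have h := integral_mul_cexp_neg_mul_sq (b := b) (by simpa using hb)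
  exact_mod_cast h

lemma sqrt_two_pi_mul_mul_sqrt_two_pi_mul {u v : ℝ} (hu : 0 ≤ u) (hv : 0 < v) :
    √(2 * π * u) * √(2 * π * v) = 2 * π * v * √(u / v) := by
  rw [← sqrt_mul (by positivity),
    show 2 * π * u * (2 * π * v) = (2 * π * v) ^ 2 * (u / v) by field_simp,
    sqrt_mul (by positivity), sqrt_sq (by positivity)]

lemma integral_gaussDensity_mul_gaussDensity_mul {u v : ℝ} (hu : 0 < u) (hv : 0 < v) (t : ℝ) :
    ∫ x in Ioi (0 : ℝ), gaussDensity u x * (x * gaussDensity v (t * x)) =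
      (2 * π)⁻¹ * (√(u / v) * (1 + (t * √(u / v)) ^ 2)⁻¹) := by
  have hb : 0 < (2 * u)⁻¹ + (2 * v)⁻¹ * t ^ 2 := by positivity
  have hsq : √(u / v) ^ 2 = u / v := sq_sqrt (by positivity)
  calc ∫ x in Ioi (0 : ℝ), gaussDensity u x * (x * gaussDensity v (t * x))
      = ∫ x in Ioi (0 : ℝ), (√(2 * π * u) * √(2 * π * v))⁻¹ *
          (x * exp (-((2 * u)⁻¹ + (2 * v)⁻¹ * t ^ 2) * x ^ 2)) := by
        congr with x
        rw [gaussDensity_eq, gaussDensity_eq, show -((2 * u)⁻¹ + (2 * v)⁻¹ * t ^ 2) * x ^ 2 =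
          -(2 * u)⁻¹ * x ^ 2 + -(2 * v)⁻¹ * (t * x) ^ 2 by ring, exp_add, mul_inv]
        ring
    _ = (2 * π * v * √(u / v))⁻¹ * (2 * ((2 * u)⁻¹ + (2 * v)⁻¹ * t ^ 2))⁻¹ := by
        rw [integral_const_mul, integral_mul_exp_neg_mul_sq_Ioi hb,
          sqrt_two_pi_mul_mul_sqrt_two_pi_mul hu.le hv]
    _ = (2 * π)⁻¹ * (√(u / v) * (1 + (t * √(u / v)) ^ 2)⁻¹) := by
        rw [mul_pow, hsq]
        field_simp
        rw [hsq]
        field_simp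

lemma integrable_gaussDensity_mul_gaussDensity_mul {u v : ℝ} (hu : 0 < u) (hv : 0 < v)
    (a b : ℝ) :
    Integrable (fun p : ℝ × ℝ ↦ gaussDensity u p.2 * (p.2 * gaussDensity v (p.1 * p.2)))
      ((volume.restrict (uIoc a b)).prod (volume.restrict (Ioi 0))) := by
  have hbound : Integrable (fun p : ℝ × ℝ ↦ (√(2 * π * v))⁻¹ * (gaussDensity u p.2 * p.2))
      ((volume.restrict (uIoc a b)).prod (volume.restrict (Ioi 0))) :=
    Integrable.mul_prod (intervalIntegrable_const (c := (√(2 * π * v))⁻¹)).def'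
      (integrable_gaussDensity_mul_self hu).integrableOn
  have hcont : Continuous fun p : ℝ × ℝ ↦
      gaussDensity u p.2 * (p.2 * gaussDensity v (p.1 * p.2)) := by
    have := continuous_gaussDensity u
    have := continuous_gaussDensity v
    fun_prop
  refine hbound.mono hcont.aestronglyMeasurable (.of_forall fun p ↦ ?_)
  rw [← mul_assoc, mul_comm, norm_mul, norm_mul (√(2 * π * v))⁻¹]
  gcongr
  rw [norm_of_nonneg (gaussDensity_nonneg v _)]
  exact (gaussDensity_le hv.le _).trans (le_abs_self _)

lemma gaussDensity_mul_gaussPartialCDF_eq (u v x : ℝ) :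
    gaussDensity u x * gaussPartialCDF v x =
      ∫ t in (0 : ℝ)..1, gaussDensity u x * (x * gaussDensity v (t * x)) := by
  rw [gaussPartialCDF_eq_integral_zero_one, ← intervalIntegral.integral_const_mul]

lemma integrableOn_gaussDensity_mul_gaussPartialCDF {u v : ℝ} (hu : 0 < u) (hv : 0 < v) :
    IntegrableOn (fun x ↦ gaussDensity u x * gaussPartialCDF v x) (Ioi 0) := by
  simpa only [gaussDensity_mul_gaussPartialCDF_eq, intervalIntegral.integral_of_le zero_le_one,
    uIoc_of_le (zero_le_one' ℝ), IntegrableOn] using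
    (integrable_gaussDensity_mul_gaussDensity_mul hu hv 0 1).integral_prod_right

theorem integral_gaussDensity_mul_gaussPartialCDF {u v : ℝ} (hu : 0 < u) (hv : 0 < v) :
    ∫ x in Ioi (0 : ℝ), gaussDensity u x * gaussPartialCDF v x = arctan √(u / v) / (2 * π) := by
  calc ∫ x in Ioi (0 : ℝ), gaussDensity u x * gaussPartialCDF v x
      = ∫ t in (0 : ℝ)..1, ∫ x in Ioi (0 : ℝ),
          gaussDensity u x * (x * gaussDensity v (t * x)) := by
        simp only [gaussDensity_mul_gaussPartialCDF_eq]
        exact (intervalIntegral_integral_swap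
          (integrable_gaussDensity_mul_gaussDensity_mul hu hv 0 1)).symm
    _ = (2 * π)⁻¹ * (√(u / v) * ∫ t in (0 : ℝ)..1, (1 + (t * √(u / v)) ^ 2)⁻¹) := by
        simp only [integral_gaussDensity_mul_gaussDensity_mul hu hv,
          intervalIntegral.integral_const_mul]
    _ = arctan √(u / v) / (2 * π) := by
        rw [intervalIntegral.mul_integral_comp_mul_right (f := fun s ↦ (1 + s ^ 2)⁻¹), zero_mul,
          one_mul, integral_inv_one_add_sq, arctan_zero, sub_zero, inv_mul_eq_div]

lemma arctan_sqrt_div_one_sub {p : ℝ} (hp0 : 0 ≤ p) (hp1 : p < 1) :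
    arctan √(p / (1 - p)) = arcsin √p := by
  have hmem : √p ∈ Ioo (-1) 1 := ⟨by linarith [sqrt_nonneg p], by rwa [sqrt_lt' one_pos, one_pow]⟩
  rw [arcsin_eq_arctan hmem, sq_sqrt hp0, sqrt_div hp0]

lemma arcsin_le_pi_div_two_mul {x : ℝ} (hx : 0 ≤ x) : arcsin x ≤ π / 2 * x := by
  rcases le_total x 1 with hx1 | hx1
  · have hjordan := mul_le_sin (arcsin_nonneg.mpr hx) (arcsin_le_pi_div_two x)
    rw [sin_arcsin (by linarith) hx1, ← inv_div, inv_mul_le_iff₀ (by positivity)] at hjordan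
    exact hjordan
  · exact (arcsin_le_pi_div_two x).trans (le_mul_of_one_le_right (by positivity) hx1)

lemma mul_min_one_div_le {K : Type*} [Field K] [LinearOrder K] [IsStrictOrderedRing K] {c x : K}
    (hx : 0 < x) : x * min 1 (c / x) ≤ c := by
  rw [mul_min_of_nonneg _ _ hx.le, mul_div_cancel₀ _ hx.ne']
  exact min_le_right _ _

lemma integral_gaussDensity_mul_gaussPartialCDF_mul_min_le {η v a : ℝ}
    (hη : 0 < η) (hv : 0 < v) (ha : 0 ≤ a) :
    ∫ x in Ioi (0 : ℝ), 2 * √(2 * π) * (x / η) * gaussDensity η x * gaussPartialCDF v x *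
        min 1 (a * √η / x)
      ≤ 2 * √(2 * π) * (a / √η) * (arctan √(η / v) / (2 * π)) := by
  rw [← integral_gaussDensity_mul_gaussPartialCDF hη hv, ← integral_const_mul]
  refine integral_mono_of_nonneg ?_
    ((integrableOn_gaussDensity_mul_gaussPartialCDF hη hv).const_mul _) ?_
  all_goals
    filter_upwards [ae_restrict_mem measurableSet_Ioi] with x (hx : 0 < x)
    have hφ := gaussDensity_nonneg η x
    have hΦ := gaussPartialCDF_nonneg v hx.le
  · dsimp only [Pi.zero_apply]
    positivity
  · calc 2 * √(2 * π) * (x / η) * gaussDensity η x * gaussPartialCDF v x * min 1 (a * √η / x)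
        = 2 * √(2 * π) / η * (gaussDensity η x * gaussPartialCDF v x) *
            (x * min 1 (a * √η / x)) := by ring
      _ ≤ 2 * √(2 * π) / η * (gaussDensity η x * gaussPartialCDF v x) * (a * √η) :=
          mul_le_mul_of_nonneg_left (mul_min_one_div_le hx) (by positivity)
      _ = 2 * √(2 * π) * (a / √η) * (gaussDensity η x * gaussPartialCDF v x) := by
          field_simp
          rw [sq_sqrt hη.le]
          ring

end

/-- For every real `η` with `0 < η ≤ 1` and every `a > 0`,
`∫₀^∞ 2√(2π) (x/η) φ_η(x) Φ̃_{1-η}(x) · min(1, a√η/x) dx ≤ 2a`; this is the key estimate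
yielding `P(inf_{u ∈ [η,1]} B_me(u) < a η^{1/2}) ≤ 2a` for the standard Brownian meander. -/
theorem stmt_9 (η a : ℝ) (hη0 : 0 < η) (hη : η ≤ 1) (ha : 0 < a) :
    (∫ x in Set.Ioi (0 : ℝ),
        2 * Real.sqrt (2 * Real.pi) * (x / η) * gaussDensity η x *
            gaussPartialCDF (1 - η) x * min 1 (a * Real.sqrt η / x))
      ≤ 2 * a := by
  rcases hη.eq_or_lt with rfl | hη1
  -- The density of variance `0` is `0` because `(√0)⁻¹ = 0`, so the integrand vanishes.
  · simpa [gaussPartialCDF, gaussDensity] using ha.le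
  have harcsin : Real.arcsin √η ≤ Real.pi / 2 * √η := arcsin_le_pi_div_two_mul (Real.sqrt_nonneg η)
  have hsqrt : √(2 * Real.pi) ≤ 4 :=
    Real.sqrt_le_iff.mpr ⟨by norm_num, by linarith [Real.pi_lt_four]⟩
  calc _ ≤ 2 * √(2 * Real.pi) * (a / √η) * (Real.arctan √(η / (1 - η)) / (2 * Real.pi)) :=
        integral_gaussDensity_mul_gaussPartialCDF_mul_min_le hη0 (sub_pos.mpr hη1) ha.le
    _ = 2 * √(2 * Real.pi) * (a / √η) * (Real.arcsin √η / (2 * Real.pi)) := by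
        rw [arctan_sqrt_div_one_sub hη0.le hη1]
    _ ≤ 2 * √(2 * Real.pi) * (a / √η) * (Real.pi / 2 * √η / (2 * Real.pi)) := by gcongr
    _ = a / 2 * √(2 * Real.pi) := by field_simp
    _ ≤ a / 2 * 4 := by gcongr
    _ = 2 * a := by ring
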